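/- Let f : (ℕ→ℕ) → Set ℕ be a first-order problem such that for every n ∈ ℕ the set {p | n ∈ f p} is a Borel subset of Baire space (a measurable set for the Borel σ-algebra of ℕ→ℕ). Then exactly one of the following holds: (1) f ≤_W* C_ℕ; (2) Π⁰₂ACC_ℕ ≤_W* f. -/

import Mathlib

/-- The domain of a first-order problem. -/
def domFO (f : (ℕ → ℕ) → Set ℕ) : Set (ℕ → ℕ) := {p | f p ≠ ∅}

/-- Continuous Weihrauch reducibility between first-order problems. -/
def RedFOFO (f g : (ℕ → ℕ) → Set ℕ) : Prop :=
  ∃ (H : (ℕ → ℕ) → (ℕ → ℕ)) (K : (ℕ → ℕ) × ℕ → ℕ),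
    ContinuousOn H (domFO f) ∧
    ContinuousOn K {pn : (ℕ → ℕ) × ℕ | pn.1 ∈ domFO f ∧ pn.2 ∈ g (H pn.1)} ∧
    (∀ p ∈ domFO f, H p ∈ domFO g) ∧
    (∀ p ∈ domFO f, ∀ n ∈ g (H p), K (p, n) ∈ f p)

/-- Closed choice on the naturals: find a number that is never enumerated out
(`p k = n + 1` removes `n`), on the domain where some number survives. -/
def CN (p : ℕ → ℕ) : Set ℕ := {n | ∀ k, p k ≠ n + 1}

/-- `Π⁰₂ACC_ℕ`: find a number to which the input sequence does not converge. -/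
def Pi02ACCN (p : ℕ → ℕ) : Set ℕ := {k | ¬ ∃ N, ∀ n ≥ N, p n = k}

/-!
Call `A` σ-solvable if countably many closed sets cover it, on each of which a single number solves
all instances of `f`. Then `f ≤_W* C_ℕ` iff `domFO f` is σ-solvable: closed choice searches for the
index of a closed set containing the instance. By Baire category `Π⁰₂ACC_ℕ` has no such cover, since
the sequences converging to any given `k` are dense, so at most one alternative holds.

If the analytic set `domFO f = range π` is not σ-solvable, deleting all the open sets whose
`π`-image is σ-solvable leaves a nonempty `Z` such that no number `k` solves all instances in
`closure (π '' (Z ∩ U))`, for any open `U` meeting `Z`. An input `p` of `Π⁰₂ACC_ℕ` is then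
transformed into an instance of `f` by finite-injury approximation: output an element of such a
closure, and whenever the current value of `p` solves the instance being output, switch to a nearby
one, in the closure belonging to a smaller neighbourhood, that it does not solve. Finitely many
switches leave an instance that defeats the limit of `p`, if there is one; infinitely many switches
force `p` to diverge and shrink the neighbourhoods to a point `z`, so that the output is the
instance `π z`.
-/

open Set Filter Topology PiNat
open MeasureTheory (AnalyticSet)

section Cylinder

variable {E F : ℕ → Type*} [∀ n, TopologicalSpace (E n)] [∀ n, TopologicalSpace (F n)]

theorem hasBasis_nhds_cylinder [∀ n, DiscreteTopology (E n)] (x : ∀ n, E n) :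
    (𝓝 x).HasBasis (fun _ ↦ True) (cylinder x) := by
  refine ⟨fun s ↦ ⟨fun hs ↦ ?_, fun ⟨n, _, hn⟩ ↦ ?_⟩⟩
  · obtain ⟨_, ⟨y, n, rfl⟩, hx, hsub⟩ := (isTopologicalBasis_cylinders E).mem_nhds_iff.1 hs
    exact ⟨n, trivial, mem_cylinder_iff_eq.1 hx ▸ hsub⟩
  · exact mem_of_superset ((isOpen_cylinder E x n).mem_nhds (self_mem_cylinder x n)) hn

theorem cylinder_mem_nhds [∀ n, DiscreteTopology (E n)] (x : ∀ n, E n) (n : ℕ) :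
    cylinder x n ∈ 𝓝 x :=
  (hasBasis_nhds_cylinder x).mem_of_mem trivial

theorem isClosed_cylinder [∀ n, T1Space (E n)] (x : ∀ n, E n) (n : ℕ) :
    IsClosed (cylinder x n) := by
  rw [cylinder_eq_pi]
  exact isClosed_set_pi fun _ _ ↦ isClosed_singleton

theorem mem_iff_forall_inter_cylinder_nonempty [∀ n, DiscreteTopology (E n)]
    {A : Set (∀ n, E n)} (hA : IsClosed A) {x : ∀ n, E n} :
    x ∈ A ↔ ∀ n, (cylinder x n ∩ A).Nonempty := by
  have hclosure := mem_closure_iff_nhds_basis' (t := A) (hasBasis_nhds_cylinder x)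
  simpa only [hA.closure_eq, true_imp_iff] using hclosure

theorem continuous_of_forall_mem_cylinder [∀ n, DiscreteTopology (E n)]
    {H : (∀ n, E n) → ∀ n, F n} (hH : ∀ x n, ∀ y ∈ cylinder x n, H y ∈ cylinder (H x) n) :
    Continuous H := by
  refine continuous_pi fun j ↦ IsLocallyConstant.continuous ?_
  refine (IsLocallyConstant.iff_eventually_eq _).2 fun x ↦ ?_
  filter_upwards [cylinder_mem_nhds x (j + 1)] with y hy using hH x (j + 1) y hy j j.lt_succ_self

theorem tendsto_of_forall_mem_cylinder {ι : Type*} {l : Filter ι} {u v : ι → ∀ n, E n}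
    {m : ι → ℕ} {a : ∀ n, E n} (hm : Tendsto m l atTop) (huv : ∀ i, u i ∈ cylinder (v i) (m i))
    (hv : Tendsto v l (𝓝 a)) : Tendsto u l (𝓝 a) := by
  rw [tendsto_pi_nhds] at hv ⊢
  intro j
  refine (hv j).congr' ?_
  filter_upwards [hm.eventually_gt_atTop j] with i hi using (huv i j hi).symm

end Cylinder

theorem mem_cylinder_of_le {E : ℕ → Type*} {u : ℕ → ∀ n, E n} {m : ℕ → ℕ} (hm : Monotone m)
    (hu : ∀ i, u (i + 1) ∈ cylinder (u i) (m i)) {i n : ℕ} (hin : i ≤ n) :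
    u n ∈ cylinder (u i) (m i) := by
  induction n, hin using Nat.le_induction with
  | base => exact self_mem_cylinder _ _
  | succ n hin ih =>
    rw [← mem_cylinder_iff_eq.1 ih]
    exact cylinder_anti _ (hm hin) (hu n)

theorem exists_forall_mem_cylinder {E : ℕ → Type*} {u : ℕ → ∀ n, E n} {m : ℕ → ℕ}
    (hm : Monotone m) (hu : ∀ i, u (i + 1) ∈ cylinder (u i) (m i)) :
    ∃ a, ∀ i, a ∈ cylinder (u i) (m i) := by
  have hcoord : ∀ j, ∃ y, ∀ i, j < m i → y = u i j := by
    intro j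
    by_cases hj : ∃ i, j < m i
    · obtain ⟨i₀, hi₀⟩ := hj
      refine ⟨u i₀ j, fun i hi ↦ ?_⟩
      obtain h | h := le_total i₀ i
      · exact (mem_cylinder_of_le hm hu h j hi₀).symm
      · exact mem_cylinder_of_le hm hu h j hi
    · exact ⟨u 0 j, fun i hi ↦ (hj ⟨i, hi⟩).elim⟩
  choose a ha using hcoord
  exact ⟨a, fun i j hj ↦ ha j i hj⟩

theorem setOf_clusterPt_mem {X : Type*} [TopologicalSpace X] [HereditarilyLindelofSpace X]
    (l : Filter X) [CountableInterFilter l] : {x | ClusterPt x l} ∈ l := by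
  by_contra hl
  have : NeBot (l ⊓ 𝓟 {x | ClusterPt x l}ᶜ) :=
    ⟨mt mem_iff_inf_principal_compl.2 hl⟩
  obtain ⟨x, hx, hxl⟩ := HereditarilyLindelofSpace.isLindelof {x | ClusterPt x l}ᶜ
    (inf_le_right : l ⊓ 𝓟 {x | ClusterPt x l}ᶜ ≤ _)
  exact hx (hxl.mono inf_le_left)

variable {f g h : (ℕ → ℕ) → Set ℕ}

theorem mem_domFO_iff {p : ℕ → ℕ} : p ∈ domFO f ↔ (f p).Nonempty :=
  nonempty_iff_ne_empty.symm

theorem analyticSet_domFO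
    (hf : ∀ n : ℕ, @MeasurableSet (ℕ → ℕ) (borel (ℕ → ℕ)) {p : ℕ → ℕ | n ∈ f p}) :
    AnalyticSet (domFO f) := by
  borelize (ℕ → ℕ)
  have hdom : domFO f = ⋃ n, {p | n ∈ f p} := by
    ext p
    simp [mem_domFO_iff, Set.Nonempty]
  rw [hdom]
  exact .iUnion fun n ↦ (hf n).analyticSet

theorem RedFOFO.trans (hfg : RedFOFO f g) (hgh : RedFOFO g h) : RedFOFO f h := by
  obtain ⟨H, K, hH, hK, hHdom, hKsol⟩ := hfg
  obtain ⟨H', K', hH', hK', hHdom', hKsol'⟩ := hgh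
  refine ⟨H' ∘ H, fun x ↦ K (x.1, K' (H x.1, x.2)), hH'.comp hH hHdom, ?_,
    fun p hp ↦ hHdom' _ (hHdom p hp),
    fun p hp n hn ↦ hKsol p hp _ (hKsol' _ (hHdom p hp) n hn)⟩
  have hHfst : ContinuousOn (fun x : (ℕ → ℕ) × ℕ ↦ H x.1)
      {x | x.1 ∈ domFO f ∧ x.2 ∈ h (H' (H x.1))} :=
    hH.comp continuousOn_fst fun _ hx ↦ hx.1
  refine hK.comp (continuousOn_fst.prodMk (hK'.comp (hHfst.prodMk continuousOn_snd) ?_)) ?_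
  · exact fun x hx ↦ ⟨hHdom _ hx.1, hx.2⟩
  · exact fun x hx ↦ ⟨hx.1, hKsol' _ (hHdom _ hx.1) _ hx.2⟩

/-- A single number solves every instance of `f` lying in `A`. -/
def UniformlySolvableOn (f : (ℕ → ℕ) → Set ℕ) (A : Set (ℕ → ℕ)) : Prop :=
  ∃ n, ∀ x ∈ A ∩ domFO f, n ∈ f x

/-- Membership in the σ-ideal generated by the closed sets on which `f` is uniformly solvable.
The closed sets are closed in Baire space, not just relative to `domFO f`. -/
def SigmaSolvableOn (f : (ℕ → ℕ) → Set ℕ) (A : Set (ℕ → ℕ)) : Prop :=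
  ∃ F : ℕ → Set (ℕ → ℕ),
    (∀ i, IsClosed (F i) ∧ UniformlySolvableOn f (F i)) ∧ A ⊆ ⋃ i, F i

theorem sigmaSolvableOn_iUnion_of_isClosed {ι : Type*} [Countable ι] {F : ι → Set (ℕ → ℕ)}
    (hF : ∀ i, IsClosed (F i)) (hfF : ∀ i, UniformlySolvableOn f (F i)) :
    SigmaSolvableOn f (⋃ i, F i) := by
  have := Encodable.ofCountable ι
  refine ⟨fun n ↦ ⋃ i ∈ Encodable.decode₂ ι n, F i, fun n ↦ ?_,
    (Encodable.iUnion_decode₂ F).superset⟩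
  exact Encodable.iUnion_decode₂_cases (C := fun A ↦ IsClosed A ∧ UniformlySolvableOn f A)
    ⟨isClosed_empty, 0, by simp⟩ fun i ↦ ⟨hF i, hfF i⟩

theorem UniformlySolvableOn.sigmaSolvableOn {A : Set (ℕ → ℕ)} (hfA : UniformlySolvableOn f A)
    (hA : IsClosed A) : SigmaSolvableOn f A :=
  ⟨fun _ ↦ A, fun _ ↦ ⟨hA, hfA⟩, (iUnion_const A).superset⟩

namespace SigmaSolvableOn

theorem mono {A B : Set (ℕ → ℕ)} (hB : SigmaSolvableOn f B) (hAB : A ⊆ B) :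
    SigmaSolvableOn f A :=
  let ⟨F, hF, hBF⟩ := hB
  ⟨F, hF, hAB.trans hBF⟩

theorem sUnion {S : Set (Set (ℕ → ℕ))} (hS : S.Countable)
    (hfS : ∀ A ∈ S, SigmaSolvableOn f A) :
    SigmaSolvableOn f (⋃₀ S) := by
  have := hS.to_subtype
  choose F hF hAF using fun A : S ↦ hfS A A.2
  refine (sigmaSolvableOn_iUnion_of_isClosed (F := fun i : S × ℕ ↦ F i.1 i.2)
    (fun i ↦ (hF _ _).1) fun i ↦ (hF _ _).2).mono ?_
  rw [iUnion_prod', sUnion_eq_iUnion]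
  exact iUnion_mono hAF

end SigmaSolvableOn

theorem exists_continuous_cn_eq {F : ℕ → Set (ℕ → ℕ)} (hF : ∀ i, IsClosed (F i)) :
    ∃ H : (ℕ → ℕ) → ℕ → ℕ, Continuous H ∧ ∀ p, CN (H p) = {i | p ∈ F i} := by
  classical
  let H : (ℕ → ℕ) → ℕ → ℕ := fun p j ↦
    if (cylinder p j.unpair.2 ∩ F j.unpair.1).Nonempty then 0 else j.unpair.1 + 1
  refine ⟨H, continuous_of_forall_mem_cylinder fun p n q hq j hj ↦ ?_, fun p ↦ ?_⟩
  · have hcyl : cylinder q j.unpair.2 = cylinder p j.unpair.2 :=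
      mem_cylinder_iff_eq.1 (cylinder_anti p (j.unpair_right_le.trans hj.le) hq)
    simp only [H, hcyl]
  · ext i
    rw [mem_ofPred_eq, mem_iff_forall_inter_cylinder_nonempty (hF i)]
    refine ⟨fun hi N ↦ ?_, fun hi j hj ↦ ?_⟩
    · simpa [H] using hi (Nat.pair i N)
    · by_cases hne : (cylinder p j.unpair.2 ∩ F j.unpair.1).Nonempty
      · simp [H, hne] at hj
      · have heq : j.unpair.1 = i := by simpa [H, hne] using hj
        exact hne (heq ▸ hi _)

theorem SigmaSolvableOn.redFOFO_cn (hf : SigmaSolvableOn f (domFO f)) : RedFOFO f CN := by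
  obtain ⟨F, hF, hcover⟩ := hf
  choose hclosed v hv using hF
  obtain ⟨H, hH, hCN⟩ := exists_continuous_cn_eq hclosed
  refine ⟨H, fun x ↦ v x.2, hH.continuousOn,
    (continuous_of_discreteTopology.comp continuous_snd).continuousOn, fun p hp ↦ ?_,
    fun p hp n hn ↦ hv n p ⟨(hCN p).subset hn, hp⟩⟩
  rw [mem_domFO_iff, hCN]
  exact mem_iUnion.1 (hcover hp)

theorem isClosed_setOf_mem_cn (n : ℕ) : IsClosed {r | n ∈ CN r} := by
  have hinter : {r | n ∈ CN r} = ⋂ k, (fun r : ℕ → ℕ ↦ r k) ⁻¹' {n + 1}ᶜ := by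
    ext r
    simp [CN]
  rw [hinter]
  exact isClosed_iInter fun k ↦ (isClosed_discrete _).preimage (continuous_apply k)

theorem RedFOFO.sigmaSolvableOn (hf : RedFOFO f CN) : SigmaSolvableOn f (domFO f) := by
  obtain ⟨H, K, hH, hK, hHdom, hKsol⟩ := hf
  let A : ℕ × ℕ → Set (ℕ → ℕ) := fun i ↦ {p ∈ domFO f | i.1 ∈ CN (H p) ∧ K (p, i.1) = i.2}
  have hcover : domFO f ⊆ ⋃ i, closure (A i) := by
    intro p hp
    obtain ⟨n, hn⟩ := mem_domFO_iff.1 (hHdom p hp)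
    exact mem_iUnion.2 ⟨(n, K (p, n)), subset_closure ⟨hp, hn, rfl⟩⟩
  refine (sigmaSolvableOn_iUnion_of_isClosed (fun i ↦ isClosed_closure) fun i ↦ ?_).mono hcover
  refine ⟨i.2, fun x ⟨hxA, hx⟩ ↦ ?_⟩
  have hn : i.1 ∈ CN (H x) := by
    have := ((hH x hx).mono fun p hp ↦ hp.1).mem_closure (s := A i) hxA
      (t := {r | i.1 ∈ CN r}) fun p hp ↦ hp.2.1
    rwa [(isClosed_setOf_mem_cn _).closure_eq] at this
  have hKx : K (x, i.1) = i.2 := by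
    have hcont : ContinuousWithinAt (fun p ↦ K (p, i.1)) (A i) x :=
      (hK (x, i.1) ⟨hx, hn⟩).comp (f := fun p ↦ (p, i.1)) (by fun_prop)
        fun p hp ↦ ⟨hp.1, hp.2.1⟩
    simpa using hcont.mem_closure hxA (t := {i.2}) fun p hp ↦ hp.2.2
  exact hKx ▸ hKsol x hx _ hn

theorem domFO_pi02ACCN : domFO Pi02ACCN = univ := by
  refine eq_univ_of_forall fun p ↦ mem_domFO_iff.2 ?_
  by_contra hempty
  have hconv : ∀ k, ∃ N, ∀ n ≥ N, p n = k := by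
    simpa [Set.Nonempty, Pi02ACCN] using hempty
  obtain ⟨M, hM⟩ := hconv 0
  obtain ⟨N, hN⟩ := hconv 1
  have h0 := hM (max M N) (le_max_left M N)
  have h1 := hN (max M N) (le_max_right M N)
  omega

theorem frequently_notMem_pi02ACCN (p : ℕ → ℕ) (k : ℕ) : ∃ᶠ q in 𝓝 p, k ∉ Pi02ACCN q := by
  refine (hasBasis_nhds_cylinder p).frequently_iff.2 fun {N} _ ↦
    ⟨fun j ↦ if j < N then p j else k, fun j hj ↦ if_pos hj, ?_⟩
  exact not_not.2 ⟨N, fun n hn ↦ if_neg hn.not_gt⟩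

theorem not_sigmaSolvableOn_pi02ACCN : ¬ SigmaSolvableOn Pi02ACCN univ := by
  rintro ⟨F, hF, hcover⟩
  obtain ⟨i, p, hp⟩ := nonempty_interior_of_iUnion_of_closed (fun i ↦ (hF i).1)
    (univ_subset_iff.1 hcover)
  obtain ⟨k, hk⟩ := (hF i).2
  obtain ⟨q, hkq, hq⟩ := ((frequently_notMem_pi02ACCN p k).and_eventually
    (mem_interior_iff_mem_nhds.1 hp)).exists
  exact hkq (hk q ⟨hq, domFO_pi02ACCN ▸ mem_univ q⟩)

theorem not_redFOFO_pi02ACCN_cn : ¬ RedFOFO Pi02ACCN CN := fun hred ↦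
  not_sigmaSolvableOn_pi02ACCN (domFO_pi02ACCN ▸ hred.sigmaSolvableOn)

/-- The filter dual to the σ-ideal `SigmaSolvableOn f`. It is the trivial filter `⊥` when the whole
space is in the ideal. -/
def coSigmaSolvable (f : (ℕ → ℕ) → Set ℕ) : Filter (ℕ → ℕ) :=
  .ofCountableUnion {A | SigmaSolvableOn f A} (fun _ ↦ .sUnion) fun _ hB _ ↦ hB.mono

theorem compl_mem_coSigmaSolvable {A : Set (ℕ → ℕ)} :
    Aᶜ ∈ coSigmaSolvable f ↔ SigmaSolvableOn f A := by
  rw [coSigmaSolvable, mem_ofCountableUnion, compl_compl, mem_ofPred_eq]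

instance countableInterFilter_coSigmaSolvable : CountableInterFilter (coSigmaSolvable f) :=
  countableInter_ofCountableUnion ..

/-- A set `Z` every relatively open nonempty part of which has an image under `π` whose closure
defeats all constant solutions of `f`. -/
def IsUnsolvableKernel {X : Type*} [TopologicalSpace X] (f : (ℕ → ℕ) → Set ℕ) (π : X → ℕ → ℕ)
    (Z : Set X) : Prop :=
  ∀ z ∈ Z, ∀ U ∈ 𝓝 z, ¬ UniformlySolvableOn f (closure (π '' (Z ∩ U)))

theorem exists_isUnsolvableKernel {X : Type*} [TopologicalSpace X] [HereditarilyLindelofSpace X]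
    {π : X → ℕ → ℕ} (hπ : ¬ SigmaSolvableOn f (range π)) :
    ∃ Z : Set X, Z.Nonempty ∧ IsUnsolvableKernel f π Z := by
  let l := (coSigmaSolvable f).comap π
  have : NeBot l := comap_neBot_iff_compl_range.2 (compl_mem_coSigmaSolvable.not.2 hπ)
  have hZ : {z | ClusterPt z l} ∈ l := setOf_clusterPt_mem l
  refine ⟨_, nonempty_of_mem hZ, fun z hz U hU hsol ↦ ?_⟩
  have hsmall : SigmaSolvableOn f (π '' ({z | ClusterPt z l} ∩ U)) :=
    (hsol.sigmaSolvableOn isClosed_closure).mono subset_closure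
  have hcompl : ({z | ClusterPt z l} ∩ U)ᶜ ∈ l :=
    compl_mem_comap.2 (compl_mem_coSigmaSolvable.2 hsmall)
  obtain ⟨w, hwU, hwZ, hw⟩ := ((hz.frequently hU).and_eventually (inter_mem hZ hcompl)).exists
  exact hw ⟨hwZ, hwU⟩

/-- A stage of the construction of an instance of `f`: the current instance `output` may still be
replaced by `π w` for some `w ∈ Z` agreeing with `point` below `radius`, since such values
approximate it arbitrarily well. -/
structure Approx (f : (ℕ → ℕ) → Set ℕ) (π : (ℕ → ℕ) → ℕ → ℕ) (Z : Set (ℕ → ℕ)) where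
  point : ℕ → ℕ
  radius : ℕ
  output : ℕ → ℕ
  point_mem : point ∈ Z
  output_mem_domFO : output ∈ domFO f
  output_mem_cylinder : output ∈ cylinder (π point) radius
  output_mem_closure : output ∈ closure (π '' (Z ∩ cylinder point radius))

namespace Approx

variable {π : (ℕ → ℕ) → ℕ → ℕ} {Z : Set (ℕ → ℕ)}

/-- `t` is an admissible successor of `s` at time `i` against the number `k`: `k` does not solve
the output of `t`, and `t` differs from `s` only if `k` solves the output of `s`. -/
structure RefinedBy (s : Approx f π Z) (i k : ℕ) (t : Approx f π Z) : Prop where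
  notMem : k ∉ f t.output
  output_mem : t.output ∈ cylinder s.output i
  point_mem : t.point ∈ cylinder s.point s.radius
  eq_or_lt : t = s ∨ k ∈ f s.output ∧ s.radius < t.radius

theorem exists_notMem (hπ : Continuous π) (hZ : IsUnsolvableKernel f π Z) {z : ℕ → ℕ}
    (hz : z ∈ Z) (m k : ℕ) :
    ∃ s : Approx f π Z, s.point = z ∧ s.radius = m ∧ k ∉ f s.output := by
  have hU : cylinder z m ∩ π ⁻¹' cylinder (π z) m ∈ 𝓝 z :=
    inter_mem (cylinder_mem_nhds z m) (hπ.continuousAt (cylinder_mem_nhds (π z) m))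
  have hunsolv := hZ z hz _ hU
  simp only [UniformlySolvableOn, not_exists, not_forall] at hunsolv
  obtain ⟨x, ⟨hxcl, hxdom⟩, hkx⟩ := hunsolv k
  refine ⟨⟨z, m, x, hz, hxdom, ?_, ?_⟩, rfl, rfl, hkx⟩
  · refine closure_minimal ?_ (isClosed_cylinder (π z) m) hxcl
    rintro _ ⟨w, hw, rfl⟩
    exact hw.2.2
  · exact closure_mono (image_mono (inter_subset_inter_right _ inter_subset_left)) hxcl

theorem exists_refinedBy (hπ : Continuous π) (hZ : IsUnsolvableKernel f π Z)
    (s : Approx f π Z) (i k : ℕ) : ∃ t, s.RefinedBy i k t := by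
  by_cases hk : k ∈ f s.output
  · obtain ⟨_, hi, z, ⟨hzZ, hz⟩, rfl⟩ :=
      mem_closure_iff_nhds.1 s.output_mem_closure _ (cylinder_mem_nhds s.output i)
    obtain ⟨t, rfl, hrad, hkt⟩ := exists_notMem hπ hZ hzZ (max s.radius i + 1) k
    refine ⟨t, hkt, ?_, hz, .inr ⟨hk, by omega⟩⟩
    rw [← mem_cylinder_iff_eq.1 hi]
    exact cylinder_anti _ (by omega) t.output_mem_cylinder
  · exact ⟨s, hk, self_mem_cylinder _ _, self_mem_cylinder _ _, .inl rfl⟩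

section Limit

variable {s : ℕ → Approx f π Z} {p x : ℕ → ℕ}

theorem monotone_radius (hs : ∀ i, (s i).RefinedBy i (p i) (s (i + 1))) :
    Monotone fun i ↦ (s i).radius := by
  refine monotone_nat_of_le_succ fun i ↦ ?_
  obtain h | ⟨-, h⟩ := (hs i).eq_or_lt
  · rw [h]
  · exact h.le

theorem tendsto_output (hx : ∀ i, x ∈ cylinder (s i).output i) :
    Tendsto (fun i ↦ (s i).output) atTop (𝓝 x) :=
  tendsto_of_forall_mem_cylinder tendsto_id
    (fun i ↦ (mem_cylinder_comm _ _ _).1 (hx i)) tendsto_const_nhds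

theorem eq_output_of_forall_succ_eq (hx : ∀ i, x ∈ cylinder (s i).output i) {N : ℕ}
    (hN : ∀ n ≥ N, s (n + 1) = s n) : x = (s N).output := by
  refine tendsto_nhds_unique (tendsto_output hx) (tendsto_atTop_of_eventually_const (i₀ := N) ?_)
  intro n hn
  induction n, hn using Nat.le_induction with
  | base => rfl
  | succ n hn ih => rw [hN n hn, ih]

theorem notMem_of_forall_mem_cylinder (hs : ∀ i, (s i).RefinedBy i (p i) (s (i + 1)))
    (hx : ∀ i, x ∈ cylinder (s i).output i) {k : ℕ} (hk : k ∉ Pi02ACCN p) : k ∉ f x := by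
  obtain ⟨N, hN⟩ := not_not.1 hk
  have havoid : ∀ n ≥ N, k ∉ f (s (n + 1)).output := fun n hn ↦ hN n hn ▸ (hs n).notMem
  have hconst : ∀ n ≥ N + 1, s (n + 1) = s n := by
    intro n hn
    refine (hs n).eq_or_lt.resolve_right fun hchange ↦ havoid (n - 1) (by omega) ?_
    rw [Nat.sub_add_cancel (by omega), ← hN n (by omega)]
    exact hchange.1
  rw [eq_output_of_forall_succ_eq hx hconst]
  exact havoid N le_rfl

theorem mem_domFO_of_forall_mem_cylinder (hπ : Continuous π) (hπf : range π ⊆ domFO f)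
    (hs : ∀ i, (s i).RefinedBy i (p i) (s (i + 1))) (hx : ∀ i, x ∈ cylinder (s i).output i) :
    x ∈ domFO f := by
  obtain hunbounded | ⟨m, hm⟩ := tendsto_atTop_of_monotone (monotone_radius hs)
  · obtain ⟨z, hz⟩ := exists_forall_mem_cylinder (monotone_radius hs) fun i ↦ (hs i).point_mem
    have hpoint : Tendsto (fun i ↦ (s i).point) atTop (𝓝 z) :=
      tendsto_of_forall_mem_cylinder hunbounded
        (fun i ↦ (mem_cylinder_comm _ _ _).1 (hz i)) tendsto_const_nhds
    have houtput : Tendsto (fun i ↦ (s i).output) atTop (𝓝 (π z)) :=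
      tendsto_of_forall_mem_cylinder hunbounded (fun i ↦ (s i).output_mem_cylinder)
        ((hπ.tendsto z).comp hpoint)
    rw [tendsto_nhds_unique (tendsto_output hx) houtput]
    exact hπf (mem_range_self z)
  · rw [nhds_discrete, tendsto_pure, eventually_atTop] at hm
    obtain ⟨N, hN⟩ := hm
    have hconst : ∀ n ≥ N, s (n + 1) = s n := fun n hn ↦
      (hs n).eq_or_lt.resolve_right fun hlt ↦ hlt.2.ne ((hN n hn).trans (hN _ (by omega)).symm)
    rw [eq_output_of_forall_succ_eq hx hconst]
    exact (s N).output_mem_domFO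

end Limit

end Approx

theorem IsUnsolvableKernel.redFOFO_pi02ACCN {π : (ℕ → ℕ) → ℕ → ℕ} {Z : Set (ℕ → ℕ)}
    (hZ : IsUnsolvableKernel f π Z) (hZne : Z.Nonempty) (hπ : Continuous π)
    (hπf : range π ⊆ domFO f) : RedFOFO Pi02ACCN f := by
  obtain ⟨z, hz⟩ := hZne
  obtain ⟨s₀, -⟩ := Approx.exists_notMem hπ hZ hz 0 0
  choose next hnext using fun (s : Approx f π Z) i k ↦ s.exists_refinedBy hπ hZ i k
  let s : (ℕ → ℕ) → ℕ → Approx f π Z := fun p n ↦ n.rec s₀ fun i t ↦ next t i (p i)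
  have hs : ∀ p i, (s p i).RefinedBy i (p i) (s p (i + 1)) := fun p i ↦ hnext _ _ _
  have hlocal : ∀ p n, ∀ q ∈ cylinder p n, s q n = s p n := by
    intro p n q hq
    induction n with
    | zero => rfl
    | succ n ih =>
      change next (s q n) n (q n) = next (s p n) n (p n)
      rw [ih (cylinder_anti p n.le_succ hq), hq n n.lt_succ_self]
  have hlimit : ∀ p, ∃ x, ∀ i, x ∈ cylinder (s p i).output i := fun p ↦
    exists_forall_mem_cylinder monotone_id fun i ↦ (hs p i).output_mem
  choose H hH using hlimit
  have hHcont : Continuous H := by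
    refine continuous_of_forall_mem_cylinder fun p n q hq ↦ ?_
    have hHq : H q ∈ cylinder (s p n).output n := hlocal p n q hq ▸ hH q n
    rwa [← mem_cylinder_iff_eq.1 (hH p n)] at hHq
  refine ⟨H, Prod.snd, hHcont.continuousOn, continuousOn_snd, fun p _ ↦ ?_, fun p _ n hn ↦ ?_⟩
  · exact Approx.mem_domFO_of_forall_mem_cylinder hπ hπf (hs p) (hH p)
  · by_contra hnp
    exact Approx.notMem_of_forall_mem_cylinder (hs p) (hH p) hnp hn

theorem redFOFO_pi02ACCN_of_not_sigmaSolvableOn (hf : AnalyticSet (domFO f))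
    (hns : ¬ SigmaSolvableOn f (domFO f)) : RedFOFO Pi02ACCN f := by
  rw [AnalyticSet] at hf
  obtain hempty | ⟨π, hπ, hrange⟩ := hf
  · have hsolv : UniformlySolvableOn f (domFO f) := ⟨0, by simp [hempty]⟩
    exact (hns (hsolv.sigmaSolvableOn (hempty ▸ isClosed_empty))).elim
  · obtain ⟨Z, hZne, hZ⟩ := exists_isUnsolvableKernel (hrange ▸ hns)
    exact hZ.redFOFO_pi02ACCN hZne hπ hrange.subset

theorem cn_dichotomy_borel_general (f : (ℕ → ℕ) → Set ℕ) (hf : AnalyticSet (domFO f)) :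
    Xor (RedFOFO f CN) (RedFOFO Pi02ACCN f) := by
  by_cases hsolv : SigmaSolvableOn f (domFO f)
  · exact .inl ⟨hsolv.redFOFO_cn, fun hred ↦ not_redFOFO_pi02ACCN_cn (hred.trans hsolv.redFOFO_cn)⟩
  · exact .inr ⟨redFOFO_pi02ACCN_of_not_sigmaSolvableOn hf hsolv,
      fun hred ↦ hsolv hred.sigmaSolvableOn⟩

theorem cn_dichotomy_borel (f : (ℕ → ℕ) → Set ℕ)
    (hBorel : ∀ n : ℕ, @MeasurableSet (ℕ → ℕ) (borel (ℕ → ℕ)) {p : ℕ → ℕ | n ∈ f p}) :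
    Xor' (RedFOFO f CN) (RedFOFO Pi02ACCN f) :=
  cn_dichotomy_borel_general f (analyticSet_domFO hBorel)
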